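/- arXiv:1709.04799 — 2 statements merged into one kernel-verified Lean document; each statement's English description precedes it below -/
import Mathlib

section
/- Let K be a quadratic number field with ring of integers 𝒪 and let f_K(n) = #{nonzero ideals 𝔞 ⊆ 𝒪 : N𝔞 = n}. Then for every positive integer n, f_K(n) = ∏_{q | n, q split in K} (ν_q(n) + 1) · ∏_{p | n, p inert in K} (1 + (−1)^{ν_p(n)})/2, where the products run over the prime divisors of n that are split, respectively inert, in K, and ν_p(n) denotes the p-adic valuation of n. (In particular, ramified primes contribute a factor 1.) -/
/-- `fK K n` is the number of nonzero ideals of the ring of integers of `K` of absolute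
norm `n`. -/
noncomputable def fK (K : Type*) [Field K] [NumberField K] (n : ℕ) : ℕ :=
  Nat.card {I : Ideal (NumberField.RingOfIntegers K) // Ideal.absNorm I = n ∧ I ≠ ⊥}

/-- A rational prime `p` is split in the quadratic number field `K` if
`(p) = 𝔭₁𝔭₂` for two distinct prime ideals, each of norm `p`. -/
def IsSplitIn (K : Type*) [Field K] [NumberField K] (p : ℕ) : Prop :=
  ∃ P₁ P₂ : Ideal (NumberField.RingOfIntegers K), P₁.IsPrime ∧ P₂.IsPrime ∧ P₁ ≠ P₂ ∧
    Ideal.absNorm P₁ = p ∧ Ideal.absNorm P₂ = p ∧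
    Ideal.span {(p : NumberField.RingOfIntegers K)} = P₁ * P₂

/-- A rational prime `p` is inert in the quadratic number field `K` if `(p)` is a prime
ideal, of norm `p²`. -/
def IsInertIn (K : Type*) [Field K] [NumberField K] (p : ℕ) : Prop :=
  (Ideal.span {(p : NumberField.RingOfIntegers K)}).IsPrime ∧
    Ideal.absNorm (Ideal.span {(p : NumberField.RingOfIntegers K)}) = p ^ 2

/-!
The count of ideals of norm `n` is multiplicative: for coprime `m` and `n`, an ideal of norm
`m * n` divides `(m)(n)`, hence factors as `I * J` with `I ∣ (m)` and `J ∣ (n)`, and coprimality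
forces `N I = m` and `N J = n`. At a prime power, unique factorization turns ideals into multisets
of primes above `p`. When all `g` primes above `p` have the same norm `p ^ f`, ideals of norm
`p ^ (f * m)` are the multisets of size `m` drawn from `g` elements, and other powers of `p` are
not norms. In a quadratic field `(g, f)` is `(2, 1)`, `(1, 2)` or `(1, 1)`.
-/

open Ideal NumberField UniqueFactorizationMonoid

section CoprimeNorms

variable {R : Type*} [CommRing R] [IsDedekindDomain R] [Module.Free ℤ R]

lemma isCoprime_of_coprime_absNorm {I J : Ideal R} (h : (absNorm I).Coprime (absNorm J)) :
    IsCoprime I J := by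
  rw [isCoprime_iff_sup_eq, ← absNorm_eq_one_iff]
  exact Nat.eq_one_of_dvd_coprimes h (absNorm_dvd_absNorm_of_le le_sup_left)
    (absNorm_dvd_absNorm_of_le le_sup_right)

lemma eq_of_mul_eq_mul_of_coprime_absNorm {I I' J J' : Ideal R}
    (h : (absNorm I).Coprime (absNorm J)) (hI : absNorm I' = absNorm I)
    (hJ : absNorm J' = absNorm J) (hmul : I * J = I' * J') : I = I' :=
  dvd_antisymm
    ((isCoprime_of_coprime_absNorm (hJ ▸ h)).dvd_of_dvd_mul_right (hmul ▸ dvd_mul_right I J))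
    ((isCoprime_of_coprime_absNorm (hI ▸ h)).dvd_of_dvd_mul_right (hmul ▸ dvd_mul_right I' J'))

variable [Module.Finite ℤ R] {m n : ℕ}

lemma exists_mul_eq_of_absNorm_eq_mul (hmn : m.Coprime n) {A : Ideal R}
    (hA : absNorm A = m * n) :
    ∃ I J : Ideal R, absNorm I = m ∧ absNorm J = n ∧ I * J = A := by
  have hdvd : A ∣ span {(m : R)} * span {(n : R)} := by
    rw [span_singleton_mul_span_singleton, dvd_span_singleton, ← Nat.cast_mul, ← hA]
    exact absNorm_mem A
  obtain ⟨I, J, hIm, hJn, rfl⟩ := exists_dvd_and_dvd_of_dvd_mul hdvd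
  have hI : (absNorm I).Coprime n := by
    refine (hmn.pow_left (Module.finrank ℤ R)).coprime_dvd_left ?_
    simpa only [absNorm_span_natCast] using map_dvd absNorm hIm
  have hJ : m.Coprime (absNorm J) := by
    refine (hmn.pow_right (Module.finrank ℤ R)).coprime_dvd_right ?_
    simpa only [absNorm_span_natCast] using map_dvd absNorm hJn
  rw [map_mul] at hA
  exact ⟨I, J,
    Nat.dvd_antisymm (hI.dvd_of_dvd_mul_right (hA ▸ dvd_mul_right _ _))
      (hJ.dvd_of_dvd_mul_right (hA ▸ dvd_mul_right _ _)),
    Nat.dvd_antisymm (hJ.symm.dvd_of_dvd_mul_left (hA ▸ dvd_mul_left _ _))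
      (hI.symm.dvd_of_dvd_mul_left (hA ▸ dvd_mul_left _ _)), rfl⟩

theorem card_absNorm_eq_mul_of_coprime (hmn : m.Coprime n) :
    Nat.card {A : Ideal R // absNorm A = m * n} =
      Nat.card {I : Ideal R // absNorm I = m} * Nat.card {J : Ideal R // absNorm J = n} := by
  rw [← Nat.card_prod]
  refine (Nat.card_eq_of_bijective
    (fun x ↦ ⟨x.1.1 * x.2.1, by rw [map_mul, x.1.2, x.2.2]⟩) ⟨?_, ?_⟩).symm
  · rintro ⟨⟨I, hI⟩, J, hJ⟩ ⟨⟨I', hI'⟩, J', hJ'⟩ h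
    have hmul : I * J = I' * J' := congrArg Subtype.val h
    have hIJ : (absNorm I).Coprime (absNorm J) := by rwa [hI, hJ]
    obtain rfl : I = I' :=
      eq_of_mul_eq_mul_of_coprime_absNorm hIJ (hI'.trans hI.symm) (hJ'.trans hJ.symm) hmul
    obtain rfl : J = J' :=
      eq_of_mul_eq_mul_of_coprime_absNorm hIJ.symm (hJ'.trans hJ.symm) rfl
        (by rw [mul_comm J, hmul, mul_comm])
    rfl
  · rintro ⟨A, hA⟩
    obtain ⟨I, J, hI, hJ, rfl⟩ := exists_mul_eq_of_absNorm_eq_mul hmn hA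
    exact ⟨(⟨I, hI⟩, ⟨J, hJ⟩), rfl⟩

variable (R) in
theorem card_absNorm_eq_prod_primeFactors (hn : n ≠ 0) :
    Nat.card {I : Ideal R // absNorm I = n} =
      ∏ p ∈ n.primeFactors, Nat.card {I : Ideal R // absNorm I = p ^ n.factorization p} :=
  Nat.multiplicative_factorization (fun n ↦ Nat.card {I : Ideal R // absNorm I = n})
    (fun _ _ ↦ card_absNorm_eq_mul_of_coprime) (by simp [absNorm_eq_one_iff]) hn

end CoprimeNorms

section PrimesOver

variable {R : Type*} [CommRing R] {p : ℕ}

lemma mem_primesOver_span_natCast_iff (hp : p.Prime) {P : Ideal R} :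
    P ∈ (span {(p : ℤ)}).primesOver R ↔ P.IsPrime ∧ (p : R) ∈ P := by
  have hmax : (span {(p : ℤ)}).IsMaximal := by
    have := Fact.mk hp
    exact Int.ideal_span_isMaximal_of_prime p
  have hmem : span {(p : ℤ)} ≤ P.under ℤ ↔ (p : R) ∈ P := by simp
  refine and_congr_right fun hP ↦ ?_
  rw [liesOver_iff, ← hmem]
  exact ⟨le_of_eq, hmax.eq_of_le (hP.under ℤ).ne_top⟩

lemma primesOver_span_natCast_eq_singleton (hp : p.Prime) (h : (span {(p : R)}).IsMaximal) :
    (span {(p : ℤ)}).primesOver R = {span {(p : R)}} := by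
  ext M
  rw [mem_primesOver_span_natCast_iff hp, ← span_singleton_le_iff_mem, Set.mem_singleton_iff]
  constructor
  · exact fun ⟨hM, hle⟩ ↦ (h.eq_of_le hM.ne_top hle).symm
  · rintro rfl
    exact ⟨h.isPrime, le_rfl⟩

lemma primesOver_span_natCast_eq_pair (hp : p.Prime) {P Q : Ideal R} (hP : P.IsMaximal)
    (hQ : Q.IsMaximal) (h : span {(p : R)} = P * Q) :
    (span {(p : ℤ)}).primesOver R = {P, Q} := by
  ext M
  rw [mem_primesOver_span_natCast_iff hp, ← span_singleton_le_iff_mem, h, Set.mem_insert_iff,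
    Set.mem_singleton_iff]
  constructor
  · rintro ⟨hM, hle⟩
    exact (hM.mul_le.1 hle).imp (fun hPM ↦ (hP.eq_of_le hM.ne_top hPM).symm)
      fun hQM ↦ (hQ.eq_of_le hM.ne_top hQM).symm
  · rintro (rfl | rfl)
    · exact ⟨hP.isPrime, mul_le_left⟩
    · exact ⟨hQ.isPrime, mul_le_right⟩

end PrimesOver

section PrimePowerNorms

lemma multiset_prod_injective_of_forall_prime {M : Type*} [CommMonoidWithZero M]
    [UniqueFactorizationMonoid M] [Subsingleton Mˣ] {S : Set M} (hS : ∀ q ∈ S, Prime q) :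
    Function.Injective fun s : Multiset S ↦ (s.map Subtype.val).prod := by
  have hfactors (s : Multiset S) :
      normalizedFactors (s.map Subtype.val).prod = s.map Subtype.val := by
    refine normalizedFactors_prod_of_prime fun q hq ↦ ?_
    obtain ⟨q, -, rfl⟩ := Multiset.mem_map.1 hq
    exact hS q q.2
  intro s t hst
  refine Multiset.map_injective Subtype.val_injective ?_
  rw [← hfactors s, ← hfactors t]
  exact congrArg normalizedFactors hst

variable {R : Type*} [CommRing R] [IsDedekindDomain R] [Module.Free ℤ R] {p f : ℕ}

lemma isMaximal_of_absNorm_eq_prime (hp : p.Prime) {P : Ideal R} (hP : absNorm P = p) :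
    P.IsMaximal :=
  (isPrime_of_irreducible_absNorm (hP ▸ hp)).isMaximal
    (ne_zero_of_map (f := absNorm) (hP ▸ hp.ne_zero))

lemma exists_multiset_prod_eq_of_absNorm_eq_prime_pow (hp : p.Prime) {k : ℕ} {I : Ideal R}
    (hI : absNorm I = p ^ k) :
    ∃ s : Multiset ((span {(p : ℤ)}).primesOver R), (s.map Subtype.val).prod = I := by
  have hI0 : I ≠ ⊥ := ne_zero_of_map (f := absNorm) (hI ▸ pow_ne_zero k hp.ne_zero)
  have hover : ∀ P ∈ normalizedFactors I, P ∈ (span {(p : ℤ)}).primesOver R := fun P hP ↦ by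
    obtain ⟨hPprime, hIP⟩ := (Ideal.mem_normalizedFactors_iff hI0).1 hP
    have hpk : (p : R) ^ k ∈ P := by
      rw [← Nat.cast_pow, ← hI]
      exact hIP (absNorm_mem I)
    exact (mem_primesOver_span_natCast_iff hp).2 ⟨hPprime, hPprime.mem_of_pow_mem k hpk⟩
  have hprod : (normalizedFactors I).prod = I := Ideal.prod_normalizedFactors_eq_self hI0
  lift normalizedFactors I to Multiset ((span {(p : ℤ)}).primesOver R) using hover with s
  exact ⟨s, hprod⟩

lemma absNorm_multiset_prod_of_forall_absNorm_eq {S : Set (Ideal R)} {c : ℕ}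
    (hS : ∀ P ∈ S, absNorm P = c) (s : Multiset S) :
    absNorm (s.map Subtype.val).prod = c ^ s.card := by
  have hconst (P : S) : absNorm P.1 = c := hS P P.2
  simp [map_multiset_prod, hconst]

theorem card_absNorm_eq_prime_pow_mul (hp : p.Prime) (hf : f ≠ 0)
    (hnorm : ∀ P ∈ (span {(p : ℤ)}).primesOver R, absNorm P = p ^ f) (m : ℕ) :
    Nat.card {I : Ideal R // absNorm I = p ^ (f * m)} =
      ((span {(p : ℤ)}).primesOver R).ncard.multichoose m := by
  rw [← Nat.card_coe_set_eq, ← Sym.natCard_sym_eq_multichoose]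
  have hprime : ∀ P ∈ (span {(p : ℤ)}).primesOver R, Prime P := fun P hP ↦
    prime_of_isPrime
      (ne_zero_of_map (f := absNorm) (hnorm P hP ▸ pow_ne_zero f hp.ne_zero)) hP.1
  have hprod (s : Multiset ((span {(p : ℤ)}).primesOver R)) :
      absNorm (s.map Subtype.val).prod = p ^ (f * s.card) := by
    rw [absNorm_multiset_prod_of_forall_absNorm_eq hnorm, pow_mul]
  refine (Nat.card_eq_of_bijective
    (fun s : Sym _ m ↦ ⟨(s.1.map Subtype.val).prod, by rw [hprod, s.2]⟩) ⟨?_, ?_⟩).symm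
  · exact fun s t hst ↦ Subtype.ext <|
      multiset_prod_injective_of_forall_prime hprime (congrArg Subtype.val hst)
  · rintro ⟨I, hI⟩
    obtain ⟨s, rfl⟩ := exists_multiset_prod_eq_of_absNorm_eq_prime_pow hp hI
    rw [hprod] at hI
    have hcard : s.card = m :=
      Nat.eq_of_mul_eq_mul_left hf.pos (Nat.pow_right_injective hp.two_le hI)
    exact ⟨⟨s, hcard⟩, rfl⟩

theorem card_absNorm_eq_prime_pow_of_not_dvd (hp : p.Prime)
    (hnorm : ∀ P ∈ (span {(p : ℤ)}).primesOver R, absNorm P = p ^ f) {k : ℕ} (hk : ¬ f ∣ k) :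
    Nat.card {I : Ideal R // absNorm I = p ^ k} = 0 := by
  refine Nat.card_eq_zero.2 (Or.inl ⟨fun ⟨I, hI⟩ ↦ hk ?_⟩)
  obtain ⟨s, rfl⟩ := exists_multiset_prod_eq_of_absNorm_eq_prime_pow hp hI
  rw [absNorm_multiset_prod_of_forall_absNorm_eq hnorm, ← pow_mul] at hI
  exact ⟨s.card, (Nat.pow_right_injective hp.two_le hI).symm⟩

end PrimePowerNorms

section QuadraticField

variable {K : Type*} [Field K] [NumberField K] {p : ℕ}

variable (K) in
/-- A rational prime `p` is ramified in the quadratic number field `K` if `(p) = 𝔭²` for a prime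
ideal of norm `p`. -/
def IsRamifiedIn (p : ℕ) : Prop :=
  ∃ P : Ideal (𝓞 K), P.IsPrime ∧ absNorm P = p ∧ span {(p : 𝓞 K)} = P ^ 2

variable (K) in
lemma fK_eq_card_absNorm_eq {n : ℕ} (hn : n ≠ 0) :
    fK K n = Nat.card {I : Ideal (𝓞 K) // absNorm I = n} := by
  refine Nat.card_congr (Equiv.subtypeEquivRight fun I ↦ and_iff_left_of_imp ?_)
  rintro rfl rfl
  exact hn absNorm_bot

lemma fK_prime_pow_of_span_eq_mul (hp : p.Prime) {P Q : Ideal (𝓞 K)} (hP : absNorm P = p)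
    (hQ : absNorm Q = p) (h : span {(p : 𝓞 K)} = P * Q) (k : ℕ) :
    fK K (p ^ k) = ({P, Q} : Set (Ideal (𝓞 K))).ncard.multichoose k := by
  have hover := primesOver_span_natCast_eq_pair hp (isMaximal_of_absNorm_eq_prime hp hP)
    (isMaximal_of_absNorm_eq_prime hp hQ) h
  have hnorm : ∀ M ∈ (span {(p : ℤ)}).primesOver (𝓞 K), absNorm M = p ^ 1 := by
    rw [hover, pow_one]
    rintro M (rfl | rfl) <;> assumption
  rw [fK_eq_card_absNorm_eq K (pow_ne_zero k hp.ne_zero), ← hover,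
    ← card_absNorm_eq_prime_pow_mul hp one_ne_zero hnorm, one_mul]

lemma fK_prime_pow_of_isSplitIn (hp : p.Prime) (h : IsSplitIn K p) (k : ℕ) :
    fK K (p ^ k) = k + 1 := by
  obtain ⟨P, Q, -, -, hne, hP, hQ, hPQ⟩ := h
  rw [fK_prime_pow_of_span_eq_mul hp hP hQ hPQ, Set.ncard_pair hne, Nat.multichoose_two]

lemma fK_prime_pow_of_isRamifiedIn (hp : p.Prime) (h : IsRamifiedIn K p) (k : ℕ) :
    fK K (p ^ k) = 1 := by
  obtain ⟨P, -, hP, hPP⟩ := h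
  rw [fK_prime_pow_of_span_eq_mul hp hP hP (hPP.trans (sq P)), Set.pair_eq_singleton,
    Set.ncard_singleton, Nat.multichoose_one]

lemma fK_prime_pow_of_isInertIn (hp : p.Prime) (h : IsInertIn K p) (k : ℕ) :
    fK K (p ^ k) = if Even k then 1 else 0 := by
  obtain ⟨hprime, hsq⟩ := h
  have hmax : (span {(p : 𝓞 K)}).IsMaximal :=
    hprime.isMaximal (ne_zero_of_map (f := absNorm) (hsq ▸ pow_ne_zero 2 hp.ne_zero))
  have hover := primesOver_span_natCast_eq_singleton hp hmax
  have hnorm : ∀ M ∈ (span {(p : ℤ)}).primesOver (𝓞 K), absNorm M = p ^ 2 := by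
    rw [hover]
    rintro M rfl
    exact hsq
  rw [fK_eq_card_absNorm_eq K (pow_ne_zero k hp.ne_zero)]
  split_ifs with hk
  · obtain ⟨m, rfl⟩ := hk.two_dvd
    rw [card_absNorm_eq_prime_pow_mul hp two_ne_zero hnorm, hover, Set.ncard_singleton,
      Nat.multichoose_one]
  · exact card_absNorm_eq_prime_pow_of_not_dvd hp hnorm (mt even_iff_two_dvd.2 hk)

lemma not_isInertIn_of_isSplitIn (hp : p.Prime) (h : IsSplitIn K p) : ¬ IsInertIn K p := by
  intro hinert
  have hcount : 1 + 1 = if Even 1 then 1 else 0 :=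
    (fK_prime_pow_of_isSplitIn hp h 1).symm.trans (fK_prime_pow_of_isInertIn hp hinert 1)
  simp at hcount

lemma isSplitIn_or_isInertIn_or_isRamifiedIn (hK : Module.finrank ℚ K = 2) (hp : p.Prime) :
    IsSplitIn K p ∨ IsInertIn K p ∨ IsRamifiedIn K p := by
  have hsq : absNorm (span {(p : 𝓞 K)}) = p ^ 2 := by
    rw [absNorm_span_natCast, RingOfIntegers.rank, hK]
  have hne_top : span {(p : 𝓞 K)} ≠ ⊤ := by
    rw [Ne, ← absNorm_eq_one_iff, hsq]
    exact (Nat.one_lt_pow two_ne_zero hp.one_lt).ne'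
  obtain ⟨P, hPmax, hle⟩ := exists_le_maximal _ hne_top
  obtain ⟨Q, hPQ⟩ := dvd_iff_le.2 hle
  by_cases hQ : Q = ⊤
  · rw [hQ, mul_top] at hPQ
    exact Or.inr (Or.inl ⟨hPQ ▸ hPmax.isPrime, hsq⟩)
  obtain ⟨hPp, hQp⟩ : absNorm P = p ∧ absNorm Q = p := by
    rw [hPQ, map_mul] at hsq
    exact (hp.mul_eq_prime_sq_iff (absNorm_eq_one_iff.not.2 hPmax.ne_top)
      (absNorm_eq_one_iff.not.2 hQ)).1 hsq
  by_cases hne : P = Q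
  · subst hne
    exact Or.inr (Or.inr ⟨P, hPmax.isPrime, hPp, hPQ.trans (sq P).symm⟩)
  · exact Or.inl ⟨P, Q, hPmax.isPrime, (isMaximal_of_absNorm_eq_prime hp hQp).isPrime, hne, hPp,
      hQp, hPQ⟩

open scoped Classical in
theorem fK_prime_pow (hK : Module.finrank ℚ K = 2) (hp : p.Prime) (k : ℕ) :
    (fK K (p ^ k) : ℚ) = (if IsSplitIn K p then (k : ℚ) + 1 else 1) *
      if IsInertIn K p then (1 + (-1 : ℚ) ^ k) / 2 else 1 := by
  by_cases hsplit : IsSplitIn K p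
  · simp [hsplit, not_isInertIn_of_isSplitIn hp hsplit, fK_prime_pow_of_isSplitIn hp hsplit]
  by_cases hinert : IsInertIn K p
  · rcases k.even_or_odd with hk | hk
    · simp [hsplit, hinert, fK_prime_pow_of_isInertIn hp hinert, hk, one_add_one_eq_two]
    · simp [hsplit, hinert, fK_prime_pow_of_isInertIn hp hinert, hk, Nat.not_even_iff_odd.2 hk]
  · have hram : IsRamifiedIn K p :=
      ((isSplitIn_or_isInertIn_or_isRamifiedIn hK hp).resolve_left hsplit).resolve_left hinert
    simp [hsplit, hinert, fK_prime_pow_of_isRamifiedIn hp hram]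

variable (K) in
theorem fK_eq_prod_primeFactors {n : ℕ} (hn : n ≠ 0) :
    fK K n = ∏ p ∈ n.primeFactors, fK K (p ^ n.factorization p) := by
  rw [fK_eq_card_absNorm_eq K hn, card_absNorm_eq_prod_primeFactors (𝓞 K) hn]
  refine Finset.prod_congr rfl fun p hp ↦ (fK_eq_card_absNorm_eq K ?_).symm
  exact pow_ne_zero _ (Nat.prime_of_mem_primeFactors hp).ne_zero

end QuadraticField

open scoped Classical in
/-- For a quadratic number field `K` and every positive integer `n`,
`f_K(n) = ∏_{q ∣ n split} (ν_q(n) + 1) · ∏_{p ∣ n inert} (1 + (−1)^{ν_p(n)})/2`. -/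
theorem fK_eq_prod_split_inert (K : Type*) [Field K] [NumberField K]
    (hK : Module.finrank ℚ K = 2) (n : ℕ) (hn : 0 < n) :
    (fK K n : ℚ) =
      (∏ p ∈ n.primeFactors.filter fun p => IsSplitIn K p,
        ((n.factorization p : ℚ) + 1)) *
      ∏ p ∈ n.primeFactors.filter fun p => IsInertIn K p,
        ((1 + (-1 : ℚ) ^ (n.factorization p)) / 2) := by
  rw [fK_eq_prod_primeFactors K hn.ne', Nat.cast_prod, Finset.prod_filter, Finset.prod_filter,
    ← Finset.prod_mul_distrib]
  exact Finset.prod_congr rfl fun p hp ↦ fK_prime_pow hK (Nat.prime_of_mem_primeFactors hp) _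
end

section
/- Under the standing hypotheses, as x → ∞, M(x) ≤ (√(log x)/log₂ x)·( C_g/√(κ·c_†) + O(log₃ x / log₂ x) ), where the implied constant depends on Q and f. -/
open Filter

/-!
Write `L = log x`, `T = √L / (log L)³` and let `n ≤ x`. A prime `r ∈ Q` divides `g ν` to the power
`v` only if `ν ≥ v * g†(r)`: superadditivity of `g†` says that the exponent `ν` must pay for all
prime factors of `g ν` simultaneously, at the price `g†(r)` each. The exponents of the primes of
`n` above `T` add up to at most `L / log T ≈ 2 L / log L`, so the multiplicities `a j` of `q j` in
the corresponding part of `f n` satisfy `∑ a j * g†(q j) ≤ 2 L / log L`. Since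
`g†(q j) ≥ κ c_† j (log j - O(1))`, this bounds `∑ a j * j` over `j > T` by
`≈ 4 L / (κ c_† (log L)²)`.

Expanding `log (g (a j))` into increments `d k = log (g (k + 1) / g k)`, the sum `∑ log (g (a j))`
becomes `∑ d k * N k` with `N k` the number of `j` such that `a j > k`. Distinctness of the indices
makes `(N k)²` at most twice the sum of these `j`, and the Cauchy–Schwarz inequality yields the main
term. The primes of `n` and the indices `j` up to `T` contribute `O(T log L)`.
-/

section SumsOverPositiveIntegers

open Finset Real

theorem sq_card_le_two_mul_sum {s : Finset ℕ} (hs : ∀ i ∈ s, 1 ≤ i) :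
    #s ^ 2 ≤ 2 * ∑ i ∈ s, i := by
  induction s using Finset.induction_on_max with
  | empty => simp
  | insert m s hlt ih =>
    have hm : m ∉ s := fun h ↦ (hlt m h).false
    have hcard : #s ≤ m - 1 := by
      simpa using card_le_card fun i hi ↦ mem_Ico.2 ⟨hs i (mem_insert_of_mem hi), hlt i hi⟩
    have hm_pos : 1 ≤ m := hs m (mem_insert_self m s)
    have hs_sum : #s ^ 2 ≤ 2 * ∑ i ∈ s, i := ih fun i hi ↦ hs i (mem_insert_of_mem hi)
    rw [card_insert_of_notMem hm, sum_insert hm]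
    nlinarith [Nat.sub_add_cancel hm_pos]

theorem card_le_of_forall_natCast_le {s : Finset ℕ} (hs : ∀ i ∈ s, 1 ≤ i) {T : ℝ} (hT : 0 ≤ T)
    (hsT : ∀ i ∈ s, (i : ℝ) ≤ T) : (#s : ℝ) ≤ T := by
  have hcard : #s ≤ ⌊T⌋₊ := by
    simpa using card_le_card fun i hi ↦ mem_Icc.2 ⟨hs i hi, Nat.le_floor (hsT i hi)⟩
  exact (Nat.cast_le.2 hcard).trans (Nat.floor_le hT)

/-- With `N k` the number of `j ∈ J` such that `k < a j`, the left-hand side is `∑ k, d k * N k`,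
and `∑ k, N k ^ 2 ≤ 2 * ∑ j ∈ J, a j * j` because each `N k` counts distinct positive integers. -/
theorem sum_sum_range_le_sqrt_mul_sqrt {J : Finset ℕ} (hJ : ∀ j ∈ J, 1 ≤ j) (a : ℕ → ℕ)
    {d : ℕ → ℝ} (hd : Summable fun k ↦ d k ^ 2) :
    ∑ j ∈ J, ∑ k ∈ range (a j), d k ≤
      √(∑' k, d k ^ 2) * √(2 * ∑ j ∈ J, (a j : ℝ) * j) := by
  set K := J.sup a
  have swap (φ : ℕ → ℕ → ℝ) : ∑ j ∈ J, ∑ k ∈ range (a j), φ j k =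
      ∑ k ∈ range K, ∑ j ∈ J with k < a j, φ j k :=
    sum_comm' fun j k ↦ by
      have hK : j ∈ J → a j ≤ K := le_sup
      grind
  have hcard : ∑ k ∈ range K, (#{j ∈ J | k < a j} : ℝ) ^ 2 ≤ 2 * ∑ j ∈ J, (a j : ℝ) * j := by
    calc ∑ k ∈ range K, (#{j ∈ J | k < a j} : ℝ) ^ 2
        ≤ ∑ k ∈ range K, 2 * ∑ j ∈ J with k < a j, (j : ℝ) := by
          gcongr with k
          have hk := sq_card_le_two_mul_sum (s := {j ∈ J | k < a j}) (by grind)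
          simpa only [Nat.cast_pow, Nat.cast_mul, Nat.cast_sum, Nat.cast_ofNat] using
            Nat.cast_le (α := ℝ) |>.2 hk
      _ = 2 * ∑ j ∈ J, (a j : ℝ) * j := by
          rw [← mul_sum, ← swap fun j _ ↦ (j : ℝ)]
          simp
  calc ∑ j ∈ J, ∑ k ∈ range (a j), d k
      = ∑ k ∈ range K, d k * #{j ∈ J | k < a j} := by
        rw [swap]
        simp only [sum_const, nsmul_eq_mul, mul_comm]
    _ ≤ √(∑ k ∈ range K, d k ^ 2) * √(∑ k ∈ range K, (#{j ∈ J | k < a j} : ℝ) ^ 2) :=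
        sum_mul_le_sqrt_mul_sqrt _ _ _
    _ ≤ √(∑' k, d k ^ 2) * √(2 * ∑ j ∈ J, (a j : ℝ) * j) :=
        mul_le_mul (sqrt_le_sqrt (hd.sum_le_tsum _ fun _ _ ↦ sq_nonneg _)) (sqrt_le_sqrt hcard)
          (sqrt_nonneg _) (sqrt_nonneg _)

end SumsOverPositiveIntegers

section LogIncrements

open Finset Real

/-- The increments of `log ∘ g`; the sum of their squares is `C_g ^ 2 / 8`. -/
noncomputable def logIncrement (g : ℕ → ℕ) (k : ℕ) : ℝ :=
  log ((g (k + 1) : ℝ) / (g k : ℝ))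

variable {g : ℕ → ℕ}

theorem logIncrement_eq_sub (hg : ∀ k, 0 < g k) (k : ℕ) :
    logIncrement g k = log (g (k + 1)) - log (g k) :=
  log_div (Nat.cast_ne_zero.2 (hg _).ne') (Nat.cast_ne_zero.2 (hg _).ne')

theorem log_apply_eq_sum_logIncrement (hg : ∀ k, 0 < g k) (hg0 : g 0 = 1) (a : ℕ) :
    log (g a) = ∑ k ∈ range a, logIncrement g k := by
  simp [logIncrement_eq_sub hg, sum_range_sub (fun k ↦ log (g k)), hg0]

theorem log_apply_add_le (hg : ∀ k, 0 < g k) {D : ℝ} (hD : ∀ k, logIncrement g k ≤ D)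
    (a b : ℕ) :
    log (g (a + b)) ≤ log (g a) + D * b := by
  induction b with
  | zero => simp
  | succ b ih =>
    have hstep : log (g (a + b + 1)) - log (g (a + b)) ≤ D := logIncrement_eq_sub hg _ ▸ hD (a + b)
    rw [← add_assoc, Nat.cast_succ]
    linarith

theorem sum_log_apply_le_sqrt_mul_sqrt (hg : ∀ k, 0 < g k) (hg0 : g 0 = 1)
    (hsum : Summable fun k ↦ logIncrement g k ^ 2)
    {J : Finset ℕ} (hJ : ∀ j ∈ J, 1 ≤ j) (a : ℕ → ℕ) :
    ∑ j ∈ J, log (g (a j)) ≤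
      √(∑' k, logIncrement g k ^ 2) * √(2 * ∑ j ∈ J, (a j : ℝ) * j) := by
  simpa only [log_apply_eq_sum_logIncrement hg hg0] using
    sum_sum_range_le_sqrt_mul_sqrt hJ a hsum

/-- Cauchy–Schwarz handles the indices beyond `T`, where the cost `c j` is at least `w * j`; the at
most `T` remaining indices are estimated trivially. -/
theorem sum_log_apply_le_of_sum_mul_le (hg : ∀ k, 0 < g k) (hg0 : g 0 = 1)
    (hsum : Summable fun k ↦ logIncrement g k ^ 2)
    {J : Finset ℕ} (hJ : ∀ j ∈ J, 1 ≤ j) {a c : ℕ → ℕ} (hc : ∀ j ∈ J, 1 ≤ c j)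
    {E T w Λ : ℝ} (hT : 0 ≤ T) (hw : 0 < w) (hwc : ∀ j ∈ J, T < j → w * j ≤ c j)
    (hE : ∑ j ∈ J, (a j : ℝ) * c j ≤ E) (hΛ : ∀ k : ℕ, (k : ℝ) ≤ E → log (g k) ≤ Λ) :
    ∑ j ∈ J, log (g (a j)) ≤ √(∑' k, logIncrement g k ^ 2) * √(2 * (E / w)) + T * Λ := by
  have hE0 : 0 ≤ E := le_trans (by positivity) hE
  have hΛ0 : 0 ≤ Λ := by simpa [hg0] using hΛ 0 (by simpa using hE0)
  have hlarge : ∑ j ∈ J with T < (j : ℕ), (a j : ℝ) * j ≤ E / w := by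
    rw [le_div_iff₀ hw, sum_mul]
    refine (sum_le_sum fun j hj ↦ ?_).trans
      ((sum_le_sum_of_subset_of_nonneg (filter_subset _ J) fun _ _ _ ↦ by positivity).trans hE)
    have hwj : w * j ≤ c j := hwc j (mem_filter.1 hj).1 (mem_filter.1 hj).2
    rw [mul_assoc, mul_comm (j : ℝ)]
    gcongr
  have hterm (j : ℕ) (hj : j ∈ J) : log (g (a j)) ≤ Λ := hΛ _ <|
    calc (a j : ℝ) ≤ a j * c j := le_mul_of_one_le_right (by positivity) (mod_cast hc j hj)
      _ ≤ ∑ i ∈ J, (a i : ℝ) * c i :=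
        single_le_sum (f := fun i ↦ (a i : ℝ) * c i) (fun _ _ ↦ by positivity) hj
      _ ≤ E := hE
  have hsmall : ∑ j ∈ J with ¬ T < (j : ℕ), log (g (a j)) ≤ T * Λ := by
    refine (sum_le_card_nsmul _ _ Λ fun j hj ↦ hterm j (mem_filter.1 hj).1).trans ?_
    rw [nsmul_eq_mul]
    gcongr
    exact card_le_of_forall_natCast_le (fun j hj ↦ hJ j (mem_filter.1 hj).1) hT
      fun j hj ↦ not_lt.1 (mem_filter.1 hj).2
  rw [← sum_filter_add_sum_filter_not J fun j : ℕ ↦ T < j]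
  refine add_le_add ((sum_log_apply_le_sqrt_mul_sqrt hg hg0 hsum
    (fun j hj ↦ hJ j (mem_filter.1 hj).1) a).trans ?_) hsmall
  gcongr

end LogIncrements

section Factorization

open Finset Real

theorem sum_le_finsuppSum {α M : Type*} [AddCommMonoid M] [PartialOrder M] [IsOrderedAddMonoid M]
    (φ : α →₀ ℕ) (s : Finset α) {h : α → ℕ → M} (h_zero : ∀ a, h a 0 = 0)
    (h_nonneg : ∀ a k, 0 ≤ h a k) : ∑ a ∈ s, h a (φ a) ≤ φ.sum h := by
  classical
  rw [φ.sum_of_support_subset subset_union_right h fun a _ ↦ h_zero a]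
  exact sum_le_sum_of_subset_of_nonneg (subset_union_left (s₂ := φ.support))
    fun a _ _ ↦ h_nonneg a (φ a)

theorem sum_factorization_mul_log_le (m : ℕ) (s : Finset ℕ) :
    ∑ p ∈ s, (m.factorization p : ℝ) * log p ≤ log m := by
  rw [log_nat_eq_sum_factorization]
  exact sum_le_finsuppSum m.factorization s (h := fun p k ↦ (k : ℝ) * log p) (by simp)
    fun p k ↦ mul_nonneg k.cast_nonneg (log_natCast_nonneg p)

theorem sum_factorization_le_log_div_log {T : ℝ} (hT : 1 < T) (m : ℕ) {s : Finset ℕ}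
    (hs : ∀ p ∈ s, T ≤ p) : ∑ p ∈ s, (m.factorization p : ℝ) ≤ log m / log T := by
  rw [le_div_iff₀ (log_pos hT), sum_mul]
  refine (sum_le_sum fun p hp ↦ ?_).trans (sum_factorization_mul_log_le m s)
  gcongr
  exact hs p hp

theorem factorization_le_two_mul_log {p : ℕ} (hp : p.Prime) (m : ℕ) :
    (m.factorization p : ℝ) ≤ 2 * log m := by
  have hle : (m.factorization p : ℝ) ≤ log m / log 2 := by
    simpa using sum_factorization_le_log_div_log one_lt_two m (s := {p})
      (by simpa using hp.two_le)
  refine hle.trans ?_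
  rw [div_le_iff₀ (log_pos one_lt_two)]
  nlinarith [log_natCast_nonneg m, log_two_gt_d9]

/-- For `m ≠ 0`, membership of `m` in the multiplicative monoid `⟨Q⟩` generated by a set `Q` of
primes. Since every prime divides `0`, it holds at `0` only if `Q` contains all primes. -/
def HasPrimeFactorsIn (Q : Set ℕ) (m : ℕ) : Prop :=
  ∀ p : ℕ, p.Prime → p ∣ m → p ∈ Q

theorem hasPrimeFactorsIn_of_prime {Q : Set ℕ} {p : ℕ} (hp : p.Prime) (hpQ : p ∈ Q) :
    HasPrimeFactorsIn Q p :=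
  fun _ hr hrp ↦ (Nat.prime_dvd_prime_iff_eq hr hp).1 hrp ▸ hpQ

theorem exists_dvd_hasPrimeFactorsIn (Q : Set ℕ) {m : ℕ} (hm : m ≠ 0) :
    ∃ d, d ∣ m ∧ HasPrimeFactorsIn Q d ∧ ∀ r ∈ Q, d.factorization r = m.factorization r := by
  classical
  set φ := m.factorization.filter (· ∈ Q) with hφ
  have hφ_le : φ ≤ m.factorization := fun p ↦ by
    rw [hφ, Finsupp.filter_apply]
    split_ifs <;> simp
  have hdvd : φ.prod (· ^ ·) ∣ m := Nat.prod_pow_dvd_of_le_factorization hφ_le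
  have hfact : (φ.prod (· ^ ·)).factorization = φ :=
    Nat.factorization_prod_pow_eq_self_of_le_factorization hφ_le
  refine ⟨φ.prod (· ^ ·), hdvd, fun p hp hpd ↦ ?_, fun r hr ↦ ?_⟩
  · have hpos := hp.factorization_pos_of_dvd (ne_zero_of_dvd_ne_zero hm hdvd) hpd
    rw [hfact, hφ, Finsupp.filter_apply] at hpos
    by_contra hpQ
    simp [hpQ] at hpos
  · rw [hfact, hφ, Finsupp.filter_apply_pos _ _ hr]

theorem factorization_sum_mul_le_of_superadditive {Q : Set ℕ} {c : ℕ → ℕ}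
    (hc : ∀ a b, 1 < a → 1 < b → HasPrimeFactorsIn Q a → HasPrimeFactorsIn Q b →
      c a + c b ≤ c (a * b))
    {m : ℕ} (hm : m ≠ 0) (hmQ : HasPrimeFactorsIn Q m) :
    (m.factorization.sum fun r k ↦ k * c r) ≤ c m := by
  induction m using induction_on_primes with
  | zero => exact absurd rfl hm
  | one => simp
  | prime_mul p a hp ih =>
    have ha : a ≠ 0 := right_ne_zero_of_mul hm
    have hsplit : ((p * a).factorization.sum fun r k ↦ k * c r) =
        c p + a.factorization.sum fun r k ↦ k * c r := by
      rw [Nat.factorization_mul hp.ne_zero ha, Finsupp.sum_add_index' (by simp) (by intros; ring),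
        hp.factorization, Finsupp.sum_single_index (by simp), one_mul]
    rcases eq_or_ne a 1 with rfl | ha1
    · rw [hsplit]
      simp
    · have haQ : HasPrimeFactorsIn Q a := fun r hr hra ↦ hmQ r hr (hra.mul_left p)
      have hpQ : HasPrimeFactorsIn Q p := fun r hr hrp ↦ hmQ r hr (hrp.mul_right a)
      rw [hsplit]
      exact (Nat.add_le_add_left (ih ha haQ) _).trans
        (hc p a hp.one_lt (Nat.one_lt_iff_ne_zero_and_ne_one.2 ⟨ha, ha1⟩) hpQ haQ)

theorem superadditive_of_weighted {Q : Set ℕ} {c : ℕ → ℕ} {q₁ : ℕ} {cstar : ℝ} (hq₁ : 0 < q₁)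
    (hQ : ∀ p ∈ Q, q₁ ≤ p) (hcstar : 1 / (q₁ : ℝ) < cstar)
    (hc : ∀ a b, HasPrimeFactorsIn Q a → HasPrimeFactorsIn Q b → q₁ ≤ a → a ≤ b →
      (c b : ℝ) + cstar * b * c a ≤ c (a * b))
    (a b : ℕ) (ha : 1 < a) (hb : 1 < b) (haQ : HasPrimeFactorsIn Q a)
    (hbQ : HasPrimeFactorsIn Q b) : c a + c b ≤ c (a * b) := by
  wlog hab : a ≤ b generalizing a b
  · rw [add_comm, mul_comm]
    exact this b a hb ha hbQ haQ (le_of_not_ge hab)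
  have hqa : q₁ ≤ a := (hQ _ (haQ _ (Nat.minFac_prime ha.ne') a.minFac_dvd)).trans
    (Nat.minFac_le (by lia))
  have hweight : 1 ≤ cstar * b := by
    have hqb : (q₁ : ℝ) ≤ b := mod_cast hqa.trans hab
    have hq₁' : (0 : ℝ) < q₁ := mod_cast hq₁
    have hcstar_pos : 0 < cstar := (by positivity : (0 : ℝ) ≤ 1 / q₁).trans_lt hcstar
    calc 1 ≤ cstar * q₁ := ((div_lt_iff₀ hq₁').1 hcstar).le
      _ ≤ cstar * b := by gcongr
  have hle : (c b : ℝ) + c a ≤ c (a * b) :=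
    (add_le_add_right (le_mul_of_one_le_left (by positivity) hweight) _).trans
      (hc a b haQ hbQ hqa hab)
  rw [add_comm]
  exact_mod_cast hle

end Factorization

section PseudoInverse

/-- The pseudo-inverse `g†`. The infimum is taken in `ℕ`, so `pseudoInverse g y = 0` stands for
`g†(y) = ∞` when no positive integer is mapped to `y`. -/
noncomputable def pseudoInverse (g : ℕ → ℕ) (y : ℕ) : ℕ :=
  sInf {x : ℕ | 0 < x ∧ g x = y}

variable {g : ℕ → ℕ}

theorem pseudoInverse_mem (hg0 : g 0 = 1) {y : ℕ} (hy : y ≠ 1) (hyg : ∃ x, g x = y) :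
    0 < pseudoInverse g y ∧ g (pseudoInverse g y) = y := by
  obtain ⟨x, rfl⟩ := hyg
  exact Nat.sInf_mem (s := {z | 0 < z ∧ g z = g x})
    ⟨x, Nat.pos_of_ne_zero (by rintro rfl; exact hy hg0), rfl⟩

theorem pseudoInverse_le_of_le_apply (hg0 : g 0 = 1) (hg : Monotone g) {y : ℕ} (hy : 1 < y)
    (hyg : ∃ x, g x = y) {ν : ℕ} (hν : y ≤ g ν) : pseudoInverse g y ≤ ν := by
  by_contra! hlt
  have hgν : g ν = y :=
    le_antisymm ((hg hlt.le).trans_eq (pseudoInverse_mem hg0 hy.ne' hyg).2) hν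
  have hν_pos : 0 < ν := Nat.pos_of_ne_zero (by rintro rfl; lia)
  exact hlt.not_ge (Nat.sInf_le ⟨hν_pos, hgν⟩)

theorem sum_factorization_mul_pseudoInverse_le {Q : Set ℕ} (hg0 : g 0 = 1) (hg : Monotone g)
    (hrange : ∀ m, 0 < m → HasPrimeFactorsIn Q m → ∃ x, g x = m)
    (hsuper : ∀ a b, 1 < a → 1 < b → HasPrimeFactorsIn Q a → HasPrimeFactorsIn Q b →
      pseudoInverse g a + pseudoInverse g b ≤ pseudoInverse g (a * b))
    {R : Finset ℕ} (hR : ∀ r ∈ R, r ∈ Q) (ν : ℕ) :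
    ∑ r ∈ R, (g ν).factorization r * pseudoInverse g r ≤ ν := by
  have hgν : 0 < g ν := by
    have := hg ν.zero_le
    lia
  obtain ⟨d, hdvd, hdQ, hd⟩ := exists_dvd_hasPrimeFactorsIn Q hgν.ne'
  have hd_pos : 0 < d := Nat.pos_of_dvd_of_pos hdvd hgν
  have hsum : ∑ r ∈ R, (g ν).factorization r * pseudoInverse g r ≤
      d.factorization.sum fun r k ↦ k * pseudoInverse g r := by
    rw [← Finset.sum_congr rfl fun r hr ↦ congrArg (· * _) (hd r (hR r hr))]
    exact sum_le_finsuppSum d.factorization R (h := fun r k ↦ k * pseudoInverse g r) (by simp)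
      fun _ _ ↦ Nat.zero_le _
  obtain rfl | hd1 : d = 1 ∨ 1 < d := by lia
  · exact hsum.trans (by simp)
  · calc ∑ r ∈ R, (g ν).factorization r * pseudoInverse g r
        ≤ d.factorization.sum fun r k ↦ k * pseudoInverse g r := hsum
      _ ≤ pseudoInverse g d := factorization_sum_mul_le_of_superadditive hsuper hd_pos.ne' hdQ
      _ ≤ ν := pseudoInverse_le_of_le_apply hg0 hg hd1 (hrange d hd_pos hdQ)
        (Nat.le_of_dvd hgν hdvd)

end PseudoInverse

/-- `f` is multiplicative, with `f(p^ν) = g(ν)` for primes `p ∈ Q` and `f(p^ν) ∈ {0, 1}` for the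
other primes, and with the convention `f(0) = 1`. -/
structure IsMultiplicativeLift (Q : Set ℕ) (g f : ℕ → ℕ) : Prop where
  map_zero : f 0 = 1
  map_one : f 1 = 1
  map_mul_of_coprime : ∀ m₁ m₂ : ℕ, m₁.Coprime m₂ → f (m₁ * m₂) = f m₁ * f m₂
  map_pow_of_mem : ∀ p ν : ℕ, p.Prime → p ∈ Q → 1 ≤ ν → f (p ^ ν) = g ν
  map_pow_of_notMem : ∀ p ν : ℕ, p.Prime → p ∉ Q → 1 ≤ ν → f (p ^ ν) = 0 ∨ f (p ^ ν) = 1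

namespace IsMultiplicativeLift

open Finset Real

open scoped Classical in
theorem eq_prod_or_eq_zero {Q : Set ℕ} {g f : ℕ → ℕ} (hf : IsMultiplicativeLift Q g f) (n : ℕ) :
    f n = ∏ p ∈ n.primeFactors with p ∈ Q, g (n.factorization p) ∨ f n = 0 := by
  have hprod : f n = ∏ p ∈ n.primeFactors, f (p ^ n.factorization p) :=
    Nat.multiplicative_factorization' f hf.map_mul_of_coprime hf.map_zero hf.map_one
  refine or_iff_not_imp_right.2 fun hfn ↦ ?_
  have hfactor_ne : ∀ p ∈ n.primeFactors, f (p ^ n.factorization p) ≠ 0 :=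
    prod_ne_zero_iff.1 (hprod ▸ hfn)
  rw [hprod, prod_filter]
  refine prod_congr rfl fun p hp ↦ ?_
  have hp_prime := Nat.prime_of_mem_primeFactors hp
  have hpos : 1 ≤ n.factorization p := Nat.pos_of_ne_zero (Finsupp.mem_support_iff.1 hp)
  split_ifs with hpQ
  · exact hf.map_pow_of_mem p _ hp_prime hpQ hpos
  · exact (hf.map_pow_of_notMem p _ hp_prime hpQ hpos).resolve_left (hfactor_ne p hp)

open scoped Classical in
theorem log_apply_le_sum {Q : Set ℕ} {g f : ℕ → ℕ} (hf : IsMultiplicativeLift Q g f)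
    (hg : ∀ k, 0 < g k) (n : ℕ) :
    log (f n) ≤ ∑ p ∈ n.primeFactors with p ∈ Q, log (g (n.factorization p)) := by
  rcases hf.eq_prod_or_eq_zero n with h | h
  · rw [h, Nat.cast_prod, log_prod fun p _ ↦ Nat.cast_ne_zero.2 (hg _).ne']
  · rw [h, Nat.cast_zero, log_zero]
    exact sum_nonneg fun p _ ↦ log_natCast_nonneg _

end IsMultiplicativeLift

section PointwiseBound

open Finset Real

variable {g : ℕ → ℕ}

theorem sum_factorization_prod_mul_le (hg : ∀ k, 0 < g k) {c : ℕ → ℕ} {R : Finset ℕ}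
    (hcost : ∀ ν, ∑ r ∈ R, (g ν).factorization r * c r ≤ ν) {ι : Type*} (S : Finset ι)
    (e : ι → ℕ) :
    ∑ r ∈ R, (∏ p ∈ S, g (e p)).factorization r * c r ≤ ∑ p ∈ S, e p := by
  simp_rw [Nat.factorization_prod_apply fun p (_ : p ∈ S) ↦ (hg (e p)).ne', sum_mul]
  rw [sum_comm]
  exact sum_le_sum fun p _ ↦ hcost (e p)

theorem sum_factorization_prod_le (hg : ∀ k, 0 < g k) {R : Finset ℕ} (hR : ∀ r ∈ R, r.Prime)
    {ι : Type*} {S : Finset ι} {e : ι → ℕ} {Λ : ℝ} (hΛ : ∀ p ∈ S, log (g (e p)) ≤ Λ) :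
    ∑ r ∈ R, ((∏ p ∈ S, g (e p)).factorization r : ℝ) ≤ #S * Λ / log 2 := by
  refine (sum_factorization_le_log_div_log one_lt_two _ fun r hr ↦
    mod_cast (hR r hr).two_le).trans ?_
  rw [Nat.cast_prod, log_prod fun p _ ↦ Nat.cast_ne_zero.2 (hg _).ne', ← nsmul_eq_mul]
  gcongr
  exact sum_le_card_nsmul _ _ _ hΛ

/-- The primes of `n` up to `T` contribute `N₂`, the larger ones `N₁`. -/
theorem IsMultiplicativeLift.exists_eq_mul {Q : Set ℕ} {f c : ℕ → ℕ}
    (hf : IsMultiplicativeLift Q g f) (hg : ∀ k, 0 < g k) (hQ : ∀ r ∈ Q, r.Prime)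
    (hcost : ∀ R : Finset ℕ, (∀ r ∈ R, r ∈ Q) → ∀ ν,
      ∑ r ∈ R, (g ν).factorization r * c r ≤ ν)
    {T Λ : ℝ} (hT : 1 < T) {n : ℕ} (hΛ : ∀ k : ℕ, (k : ℝ) ≤ 2 * log n → log (g k) ≤ Λ)
    (hfn : f n ≠ 0) :
    ∃ N₁ N₂, f n = N₁ * N₂ ∧ ∀ R : Finset ℕ, (∀ r ∈ R, r ∈ Q) →
      ∑ r ∈ R, (N₁.factorization r : ℝ) * c r ≤ log n / log T ∧
      ∑ r ∈ R, (N₂.factorization r : ℝ) ≤ T * Λ / log 2 := by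
  classical
  set S := {p ∈ n.primeFactors | p ∈ Q}
  have hS_prime (p : ℕ) (hp : p ∈ S) : p.Prime :=
    Nat.prime_of_mem_primeFactors (mem_filter.1 hp).1
  refine ⟨∏ p ∈ S with T < (p : ℕ), g (n.factorization p),
    ∏ p ∈ S with ¬ T < (p : ℕ), g (n.factorization p), ?_, fun R hR ↦ ⟨?_, ?_⟩⟩
  · rw [prod_filter_mul_prod_filter_not]
    exact (hf.eq_prod_or_eq_zero n).resolve_right hfn
  · calc ∑ r ∈ R, ((∏ p ∈ S with T < (p : ℕ), g (n.factorization p)).factorization r : ℝ) * c r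
        ≤ ∑ p ∈ S with T < (p : ℕ), (n.factorization p : ℝ) :=
          mod_cast sum_factorization_prod_mul_le hg (hcost R hR) _ n.factorization
      _ ≤ log n / log T :=
          sum_factorization_le_log_div_log hT n fun p hp ↦ (mem_filter.1 hp).2.le
  · have hΛS (p : ℕ) (hp : p ∈ S.filter fun p : ℕ ↦ ¬ T < p) : log (g (n.factorization p)) ≤ Λ :=
      hΛ _ (factorization_le_two_mul_log (hS_prime p (mem_filter.1 hp).1) n)
    have hΛ0 : 0 ≤ Λ := (log_natCast_nonneg _).trans
      (hΛ 0 (by simpa using log_natCast_nonneg n))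
    refine (sum_factorization_prod_le hg (fun r hr ↦ hQ r (hR r hr)) hΛS).trans ?_
    gcongr
    exact card_le_of_forall_natCast_le (fun p hp ↦ (hS_prime p (mem_filter.1 hp).1).one_le)
      (by linarith) fun p hp ↦ not_lt.1 (mem_filter.1 hp).2

theorem sum_log_apply_le_of_subset_image (hg0 : g 0 = 1) (hg : ∀ k, 0 < g k)
    (hsum : Summable fun k ↦ logIncrement g k ^ 2) {q c : ℕ → ℕ}
    (hq : Set.InjOn q (Set.Ici 1)) (hc : ∀ j, 1 ≤ j → 1 ≤ c (q j)) {R : Finset ℕ}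
    (hR : ∀ r ∈ R, r ∈ q '' Set.Ici 1) {a : ℕ → ℕ} {E T w Λ : ℝ} (hT : 0 ≤ T) (hw : 0 < w)
    (hwc : ∀ j : ℕ, 1 ≤ j → T < j → w * j ≤ c (q j))
    (hE : ∑ r ∈ R, (a r : ℝ) * c r ≤ E) (hΛ : ∀ k : ℕ, (k : ℝ) ≤ E → log (g k) ≤ Λ) :
    ∑ r ∈ R, log (g (a r)) ≤ √(∑' k, logIncrement g k ^ 2) * √(2 * (E / w)) + T * Λ := by
  obtain ⟨J, hJ, rfl⟩ := subset_set_image_iff.1 (show (R : Set ℕ) ⊆ q '' Set.Ici 1 from hR)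
  have hqJ : Set.InjOn q J := hq.mono hJ
  rw [sum_image hqJ] at hE ⊢
  exact sum_log_apply_le_of_sum_mul_le hg hg0 hsum (fun j hj ↦ hJ hj) (a := a ∘ q) (c := c ∘ q)
    (fun j hj ↦ hc j (hJ hj)) hT hw (fun j hj ↦ hwc j (hJ hj)) hE hΛ

theorem IsMultiplicativeLift.log_apply_apply_le {q f c : ℕ → ℕ}
    (hf : IsMultiplicativeLift (q '' Set.Ici 1) g f) (hg0 : g 0 = 1) (hg : ∀ k, 0 < g k)
    (hsum : Summable fun k ↦ logIncrement g k ^ 2) {D : ℝ} (hD0 : 0 ≤ D)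
    (hD : ∀ k, logIncrement g k ≤ D) (hq_prime : ∀ j, 1 ≤ j → (q j).Prime)
    (hq : Set.InjOn q (Set.Ici 1)) (hc : ∀ j, 1 ≤ j → 1 ≤ c (q j))
    (hcost : ∀ R : Finset ℕ, (∀ r ∈ R, r ∈ q '' Set.Ici 1) → ∀ ν,
      ∑ r ∈ R, (g ν).factorization r * c r ≤ ν)
    {T w Λ L : ℝ} (hT : exp 1 ≤ T) (hw : 0 < w)
    (hwc : ∀ j : ℕ, 1 ≤ j → T < j → w * j ≤ c (q j))
    (hΛ : ∀ k : ℕ, (k : ℝ) ≤ 2 * L → log (g k) ≤ Λ) {n : ℕ} (hn : log n ≤ L) :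
    log (f (f n)) ≤
      √(∑' k, logIncrement g k ^ 2) * √(2 * (L / log T / w)) + T * Λ +
        D * (T * Λ / log 2) := by
  classical
  have hT1 : 1 < T := (one_lt_exp_iff.2 one_pos).trans_le hT
  have hL0 : 0 ≤ L := (log_natCast_nonneg n).trans hn
  have hΛ0 : 0 ≤ Λ := (log_natCast_nonneg _).trans (hΛ 0 (by simpa using hL0))
  rcases eq_or_ne (f n) 0 with hfn | hfn
  · rw [hfn, hf.map_zero, Nat.cast_one, log_one]
    positivity
  obtain ⟨N₁, N₂, hN, hbound⟩ := hf.exists_eq_mul hg (by rintro _ ⟨j, hj, rfl⟩; exact hq_prime j hj)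
    hcost hT1 (fun k hk ↦ hΛ k (hk.trans (by gcongr))) hfn
  obtain ⟨hN₁, hN₂⟩ := mul_ne_zero_iff.1 (hN ▸ hfn)
  set R := {r ∈ (f n).primeFactors | r ∈ q '' Set.Ici 1}
  have hR (r : ℕ) (hr : r ∈ R) : r ∈ q '' Set.Ici 1 := (mem_filter.1 hr).2
  obtain ⟨hcost₁, hcount₂⟩ := hbound R hR
  have hlogT : 1 ≤ log T := (le_log_iff_exp_le (by linarith)).2 hT
  have hbudget : L / log T ≤ 2 * L := (div_le_self hL0 hlogT).trans (by linarith)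
  calc log (f (f n)) ≤ ∑ r ∈ R, log (g ((f n).factorization r)) := hf.log_apply_le_sum hg (f n)
    _ ≤ ∑ r ∈ R, (log (g (N₁.factorization r)) + D * N₂.factorization r) := by
        rw [hN, Nat.factorization_mul hN₁ hN₂]
        exact sum_le_sum fun r _ ↦ log_apply_add_le hg hD _ _
    _ = ∑ r ∈ R, log (g (N₁.factorization r)) + D * ∑ r ∈ R, (N₂.factorization r : ℝ) := by
        rw [sum_add_distrib, mul_sum]
    _ ≤ _ := by
        gcongr
        exact sum_log_apply_le_of_subset_image hg0 hg hsum hq hc hR (by linarith) hw hwc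
          (hcost₁.trans (by gcongr)) fun k hk ↦ hΛ k (hk.trans hbudget)

end PointwiseBound

section GrowthOfIncrements

open Real

variable {g : ℕ → ℕ} {B s : ℝ}

theorem logIncrement_nonneg (hg : ∀ k, 0 < g k) (hmono : Monotone g) (k : ℕ) :
    0 ≤ logIncrement g k := by
  refine log_nonneg ((one_le_div (Nat.cast_pos.2 (hg k))).2 ?_)
  exact_mod_cast hmono k.le_succ

theorem logIncrement_le_mul_rpow (hg : ∀ k, 0 < g k)
    (hratio : ∀ i : ℕ, 1 ≤ i → |(g i : ℝ) / (g (i - 1) : ℝ) - 1| ≤ B * (i : ℝ) ^ s) (k : ℕ) :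
    logIncrement g k ≤ B * ((k + 1 : ℕ) : ℝ) ^ s :=
  have hpos (i : ℕ) : (0 : ℝ) < g i := Nat.cast_pos.2 (hg i)
  (log_le_sub_one_of_pos (div_pos (hpos (k + 1)) (hpos k))).trans <|
    (le_abs_self _).trans (hratio (k + 1) k.succ_pos)

theorem nonneg_of_abs_ratio_sub_one_le
    (hratio : ∀ i : ℕ, 1 ≤ i → |(g i : ℝ) / (g (i - 1) : ℝ) - 1| ≤ B * (i : ℝ) ^ s) : 0 ≤ B := by
  simpa using (abs_nonneg _).trans (hratio 1 le_rfl)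

theorem logIncrement_le (hg : ∀ k, 0 < g k) (hs : s ≤ 0)
    (hratio : ∀ i : ℕ, 1 ≤ i → |(g i : ℝ) / (g (i - 1) : ℝ) - 1| ≤ B * (i : ℝ) ^ s) (k : ℕ) :
    logIncrement g k ≤ B :=
  (logIncrement_le_mul_rpow hg hratio k).trans <|
    mul_le_of_le_one_right (nonneg_of_abs_ratio_sub_one_le hratio) <|
      rpow_le_one_of_one_le_of_nonpos (mod_cast k.succ_pos) hs

theorem summable_logIncrement_sq (hg : ∀ k, 0 < g k) (hmono : Monotone g) (hs : s < -(1 / 2))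
    (hratio : ∀ i : ℕ, 1 ≤ i → |(g i : ℝ) / (g (i - 1) : ℝ) - 1| ≤ B * (i : ℝ) ^ s) :
    Summable fun k ↦ logIncrement g k ^ 2 := by
  have hmajorant : Summable fun k : ℕ ↦ B ^ 2 * ((k + 1 : ℕ) : ℝ) ^ (s * 2) :=
    ((summable_nat_add_iff (f := fun k : ℕ ↦ (k : ℝ) ^ (s * 2)) 1).2
      (summable_nat_rpow.2 (by linarith))).mul_left _
  refine hmajorant.of_nonneg_of_le (fun _ ↦ sq_nonneg _) fun k ↦ ?_
  calc logIncrement g k ^ 2 ≤ (B * ((k + 1 : ℕ) : ℝ) ^ s) ^ 2 :=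
        pow_le_pow_left₀ (logIncrement_nonneg hg hmono k) (logIncrement_le_mul_rpow hg hratio k) 2
    _ = B ^ 2 * ((k + 1 : ℕ) : ℝ) ^ (s * 2) := by
        rw [mul_pow, rpow_mul (Nat.cast_nonneg _), rpow_two]

theorem eventually_forall_log_apply_le {cf : ℝ} (hg0 : g 0 = 1) (hcf : 0 ≤ cf)
    (hsub : ∀ x : ℕ, 1 ≤ x → (g x : ℝ) ≤ cf * x) :
    ∀ᶠ L : ℝ in atTop, ∀ k : ℕ, (k : ℝ) ≤ 2 * L → log (g k) ≤ 2 * log L := by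
  filter_upwards [eventually_ge_atTop 1, eventually_ge_atTop (2 * cf)] with L hL1 hLcf k hk
  rcases k.eq_zero_or_pos with rfl | hk_pos
  · simpa [hg0] using log_nonneg hL1
  rcases (g k).eq_zero_or_pos with hgk | hgk
  · simpa [hgk] using log_nonneg hL1
  have hgk_le : (g k : ℝ) ≤ L ^ 2 :=
    calc (g k : ℝ) ≤ cf * k := hsub k hk_pos
      _ ≤ cf * (2 * L) := by gcongr
      _ = 2 * cf * L := by ring
      _ ≤ L ^ 2 := by rw [sq]; gcongr
  calc log (g k) ≤ log (L ^ 2) := log_le_log (Nat.cast_pos.2 hgk) hgk_le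
    _ = 2 * log L := by rw [log_pow, Nat.cast_ofNat]

end GrowthOfIncrements

section CostOfPrimes

open Real

variable {q : ℕ → ℕ} {κ cdag A B : ℝ}

theorem tendsto_log_natCast_atTop : Tendsto (fun j : ℕ ↦ log j) atTop atTop :=
  tendsto_log_atTop.comp tendsto_natCast_atTop_atTop

theorem strictMonoOn_Ici_one (hq : ∀ j, 1 ≤ j → q j < q (j + 1)) :
    StrictMonoOn q (Set.Ici 1) :=
  strictMonoOn_of_lt_add_one Set.ordConnected_Ici fun j _ hj _ ↦ hq j hj

theorem le_apply_of_strictMonoOn_Ici_one (hq : StrictMonoOn q (Set.Ici 1)) (hq1 : 1 ≤ q 1) {j : ℕ}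
    (hj : 1 ≤ j) : j ≤ q j := by
  induction j, hj using Nat.le_induction with
  | base => exact hq1
  | succ j hj ih =>
    have hstep : q j < q (j + 1) := hq (Set.mem_Ici.2 hj) (Set.mem_Ici.2 (by lia)) j.lt_succ_self
    lia

theorem eventually_mul_log_sub_le_apply (hκ : 0 ≤ κ)
    (hq : ∀ j : ℕ, 2 ≤ j → |(q j : ℝ) - κ * j * (log j + log (log j))| ≤ A * (κ * j)) :
    ∀ᶠ j : ℕ in atTop, κ * j * (log j - A) ≤ q j := by
  filter_upwards [eventually_ge_atTop 2, tendsto_log_natCast_atTop.eventually_ge_atTop 1]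
    with j hj hlogj
  have hloglog : 0 ≤ κ * j * log (log j) := mul_nonneg (by positivity) (log_nonneg hlogj)
  linarith [(abs_le.1 (hq j hj)).1]

theorem eventually_mul_log_sub_mul_le_cost {c : ℕ → ℕ} (hκ : 0 ≤ κ) (hcdag : 0 < cdag)
    (hjq : ∀ j, 1 ≤ j → j ≤ q j) (hq : ∀ᶠ j : ℕ in atTop, κ * j * (log j - A) ≤ q j)
    (hc : ∀ j, 1 ≤ j → |(c (q j) : ℝ) - cdag * q j| ≤ B * (q j : ℝ) / log (q j)) :
    ∀ᶠ j : ℕ in atTop, κ * cdag * (log j - (|A| + |B| / cdag)) * j ≤ c (q j) := by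
  filter_upwards [hq, eventually_ge_atTop 1, tendsto_log_natCast_atTop.eventually_gt_atTop 0,
    tendsto_log_natCast_atTop.eventually_ge_atTop (|B| / cdag)] with j hqj hj hlogj hlogB
  have hj_pos : (0 : ℝ) < j := Nat.cast_pos.2 hj
  have hlog_le : log j ≤ log (q j) := log_le_log hj_pos (Nat.cast_le.2 (hjq j hj))
  have herror : B * (q j : ℝ) / log (q j) ≤ |B| * (q j : ℝ) / log j :=
    div_le_div₀ (by positivity)
      (mul_le_mul_of_nonneg_right (le_abs_self B) (Nat.cast_nonneg _)) hlogj hlog_le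
  have hfactor : 0 ≤ cdag - |B| / log j := by
    rw [sub_nonneg, div_le_iff₀ hlogj, mul_comm]
    exact (div_le_iff₀ hcdag).1 hlogB
  have hqj' : κ * j * (log j - |A|) ≤ q j := by
    refine le_trans ?_ hqj
    gcongr
    exact le_abs_self A
  calc κ * cdag * (log j - (|A| + |B| / cdag)) * j
      ≤ κ * cdag * (log j - (|A| + |B| / cdag)) * j + κ * j * (|A| * |B| / log j) := by
        simpa using by positivity
    _ = κ * j * (log j - |A|) * (cdag - |B| / log j) := by
        field_simp
        ring
    _ ≤ q j * (cdag - |B| / log j) := by gcongr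
    _ = cdag * q j - |B| * (q j : ℝ) / log j := by ring
    _ ≤ c (q j) := by linarith [(abs_le.1 (hc j hj)).1]

end CostOfPrimes

section Cutoff

open Real

/-- The threshold, as a function of `L = log x`, separating small from large primes of `n` and
small from large indices `j`. The power of `log L` is large enough to make the small ones
negligible, and costs only `O(log (log L))` in `log (cutoff L)`. -/
noncomputable def cutoff (L : ℝ) : ℝ :=
  √L / log L ^ 3

theorem log_cutoff {L : ℝ} (hL : 1 < L) : log (cutoff L) = log L / 2 - 3 * log (log L) := by
  have hlog : log L ≠ 0 := (log_pos hL).ne'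
  rw [cutoff, log_div (sqrt_ne_zero'.2 (by linarith)) (pow_ne_zero 3 hlog), log_sqrt (by linarith),
    log_pow, Nat.cast_ofNat]

theorem tendsto_cutoff_atTop : Tendsto cutoff atTop atTop := by
  refine ((tendsto_exp_mul_div_rpow_atTop 3 (1 / 2) (by norm_num)).comp
    tendsto_log_atTop).congr' ?_
  filter_upwards [eventually_gt_atTop 0] with L hL
  rw [cutoff, Function.comp_apply, sqrt_eq_rpow, rpow_def_of_pos hL, mul_comm (log L)]
  norm_cast

theorem tendsto_log_cutoff_atTop : Tendsto (fun L ↦ log (cutoff L)) atTop atTop :=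
  tendsto_log_atTop.comp tendsto_cutoff_atTop

theorem eventually_mul_log_log_le_log (a : ℝ) : ∀ᶠ L : ℝ in atTop, a * log (log L) ≤ log L := by
  have hlittle := (isLittleO_log_id_atTop.const_mul_left a).def one_pos
  filter_upwards [tendsto_log_atTop.eventually hlittle, tendsto_log_atTop.eventually_ge_atTop 0]
    with L hL hL0
  simpa [abs_of_nonneg hL0] using (le_abs_self _).trans hL

theorem tendsto_log_log_atTop : Tendsto (fun L : ℝ ↦ log (log L)) atTop atTop :=
  tendsto_log_atTop.comp tendsto_log_atTop

theorem eventually_half_log_le (A : ℝ) :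
    ∀ᶠ L : ℝ in atTop,
      log L / 2 ≤ (log (cutoff L) - A) * (1 + 16 * (log (log L) / log L)) := by
  filter_upwards [eventually_gt_atTop 1, eventually_mul_log_log_le_log 16,
    tendsto_log_log_atTop.eventually_ge_atTop 0, tendsto_log_log_atTop.eventually_ge_atTop A]
    with L hL1 h16 hll0 hllA
  have hl : 0 < log L := log_pos hL1
  set t := log (log L) / log L with ht
  have ht16 : 16 * t ≤ 1 := by rwa [ht, ← mul_div_assoc, div_le_one hl]
  have htl : log (log L) = t * log L := by rw [ht, div_mul_cancel₀ _ hl.ne']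
  calc log L / 2 ≤ log L / 2 + 4 * log L * t * (1 - 16 * t) :=
        le_add_of_nonneg_right (mul_nonneg (by positivity) (sub_nonneg.2 ht16))
    _ = (log L / 2 - 4 * log (log L)) * (1 + 16 * t) := by rw [htl]; ring
    _ ≤ (log (cutoff L) - A) * (1 + 16 * t) := by
        rw [log_cutoff hL1]
        gcongr ?_ * _
        linarith

theorem eventually_sqrt_budget_le {u : ℝ} (hu : 0 < u) (A : ℝ) :
    ∀ᶠ L : ℝ in atTop, √(2 * (L / log (cutoff L) / (u * (log (cutoff L) - A)))) ≤
      √L / log L * (√8 / √u * (1 + 16 * (log (log L) / log L))) := by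
  filter_upwards [eventually_gt_atTop 1, tendsto_log_log_atTop.eventually_ge_atTop 0,
    tendsto_log_cutoff_atTop.eventually_gt_atTop 0, tendsto_log_cutoff_atTop.eventually_gt_atTop A,
    eventually_half_log_le 0, eventually_half_log_le A] with L hL1 hll hY hYA hhalf hhalfA
  have hl : 0 < log L := log_pos hL1
  set z := 1 + 16 * (log (log L) / log L)
  have hz : 0 < z := by positivity
  rw [← sub_pos] at hYA
  have hprod : (log L / 2) * (log L / 2) ≤ log (cutoff L) * (log (cutoff L) - A) * z ^ 2 :=
    calc (log L / 2) * (log L / 2) ≤ (log (cutoff L) - 0) * z * ((log (cutoff L) - A) * z) := by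
          gcongr
      _ = log (cutoff L) * (log (cutoff L) - A) * z ^ 2 := by ring
  refine sqrt_le_iff.2 ⟨by positivity, ?_⟩
  calc 2 * (L / log (cutoff L) / (u * (log (cutoff L) - A)))
      = 2 * L / u / (log (cutoff L) * (log (cutoff L) - A)) := by field_simp
    _ ≤ 2 * L / u * (z ^ 2 / ((log L / 2) * (log L / 2))) := by
        rw [div_eq_mul_inv _ (log (cutoff L) * _)]
        gcongr
        rw [inv_eq_one_div, div_le_div_iff₀ (by positivity) (by positivity)]
        linarith
    _ = (√L / log L * (√8 / √u * z)) ^ 2 := by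
        rw [mul_pow, mul_pow, div_pow, div_pow, sq_sqrt (by linarith), sq_sqrt hu.le,
          sq_sqrt (by norm_num)]
        field_simp
        norm_num

theorem eventually_cutoff_mul_two_mul_log_le :
    ∀ᶠ L : ℝ in atTop, cutoff L * (2 * log L) ≤ √L / log L * (2 * (log (log L) / log L)) := by
  filter_upwards [eventually_gt_atTop 1, tendsto_log_log_atTop.eventually_ge_atTop 1]
    with L hL1 hll
  have hl : 0 < log L := log_pos hL1
  calc cutoff L * (2 * log L) = √L / log L * (2 * (1 / log L)) := by
        rw [cutoff]
        field_simp
    _ ≤ √L / log L * (2 * (log (log L) / log L)) := by gcongr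

end Cutoff

open Real in
theorem IsMultiplicativeLift.exists_eventually_log_apply_apply_le {g q f c : ℕ → ℕ}
    (hf : IsMultiplicativeLift (q '' Set.Ici 1) g f) (hg0 : g 0 = 1) (hg : ∀ k, 0 < g k)
    (hsum : Summable fun k ↦ logIncrement g k ^ 2) {D : ℝ} (hD0 : 0 ≤ D)
    (hD : ∀ k, logIncrement g k ≤ D)
    (hΛ : ∀ᶠ L : ℝ in atTop, ∀ k : ℕ, (k : ℝ) ≤ 2 * L → log (g k) ≤ 2 * log L)
    (hq_prime : ∀ j, 1 ≤ j → (q j).Prime)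
    (hq : Set.InjOn q (Set.Ici 1)) (hc : ∀ j, 1 ≤ j → 1 ≤ c (q j))
    (hcost : ∀ R : Finset ℕ, (∀ r ∈ R, r ∈ q '' Set.Ici 1) → ∀ ν,
      ∑ r ∈ R, (g ν).factorization r * c r ≤ ν)
    {u A : ℝ} (hu : 0 < u) (hcA : ∀ᶠ j : ℕ in atTop, u * (log j - A) * j ≤ c (q j)) :
    ∃ C : ℝ, 0 < C ∧ ∀ᶠ L : ℝ in atTop, ∀ n : ℕ, log n ≤ L →
      log (f (f n)) ≤ √L / log L *
        (√(8 * ∑' k, logIncrement g k ^ 2) / √u + C * (log (log L) / log L)) := by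
  set σ := ∑' k, logIncrement g k ^ 2
  refine ⟨16 * (√(8 * σ) / √u) + 2 + 2 * D / log 2, by positivity, ?_⟩
  obtain ⟨j₀, hj₀⟩ := eventually_atTop.1 hcA
  filter_upwards [hΛ, tendsto_cutoff_atTop.eventually_ge_atTop (exp 1),
    tendsto_cutoff_atTop.eventually_ge_atTop j₀, tendsto_log_cutoff_atTop.eventually_gt_atTop A,
    eventually_sqrt_budget_le hu A, eventually_cutoff_mul_two_mul_log_le]
    with L hΛL hTe hTj₀ hTA hbudget hsmall n hn
  have hT0 : 0 < cutoff L := (exp_pos 1).trans_le hTe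
  have hwc (j : ℕ) (_ : 1 ≤ j) (hTj : cutoff L < j) :
      u * (log (cutoff L) - A) * j ≤ c (q j) := by
    refine le_trans ?_ (hj₀ j (mod_cast (hTj₀.trans hTj.le)))
    gcongr
  set t := log (log L) / log L
  calc log (f (f n))
      ≤ √σ * √(2 * (L / log (cutoff L) / (u * (log (cutoff L) - A)))) +
          cutoff L * (2 * log L) + D * (cutoff L * (2 * log L) / log 2) :=
        hf.log_apply_apply_le hg0 hg hsum hD0 hD hq_prime hq hc hcost hTe
          (mul_pos hu (sub_pos.2 hTA)) hwc hΛL hn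
    _ ≤ √σ * (√L / log L * (√8 / √u * (1 + 16 * t))) + √L / log L * (2 * t) +
          D * (√L / log L * (2 * t) / log 2) := by gcongr
    _ = √L / log L * (√(8 * σ) / √u + (16 * (√(8 * σ) / √u) + 2 + 2 * D / log 2) * t) := by
        rw [sqrt_mul (by norm_num : (0 : ℝ) ≤ 8)]
        ring

open Real in
theorem eventually_iSup_Icc_le_of_forall_log_le {F : ℕ → ℝ} (hF : ∀ n, 0 ≤ F n) {U : ℝ → ℝ}
    (hU : ∀ᶠ L : ℝ in atTop, ∀ n : ℕ, log n ≤ L → F n ≤ U L) :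
    ∀ᶠ x : ℕ in atTop, ⨆ n ∈ Finset.Icc 1 x, F n ≤ U (log x) := by
  filter_upwards [tendsto_log_natCast_atTop.eventually hU] with x hx
  have hU0 : 0 ≤ U (log x) := (hF x).trans (hx x le_rfl)
  refine Real.iSup_le (fun n ↦ Real.iSup_le (fun hn ↦ hx n ?_) hU0) hU0
  obtain ⟨hn1, hnx⟩ := Finset.mem_Icc.1 hn
  exact log_le_log (mod_cast hn1) (mod_cast hnx)

/-- **Upper bound for the maximal order of the iterated function `f`.**
Under the standing hypotheses (A.1)–(A.7) on the sequence of primes `(q_j)_{j≥1}`, the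
function `g`, its pseudo-inverse `g†` and the multiplicative function `f`, one has
`M(x) ≤ (√(log x)/log₂ x)·(C_g/√(κ·c_†) + O(log₃ x/log₂ x))` as `x → ∞`, where
`M(x) = max_{n ≤ x} log f(f(n))` and `C_g = (8·∑_{j≥1} (log(g(j)/g(j−1)))²)^{1/2}`. -/
theorem maxOrder_upper_bound
    (q : ℕ → ℕ) (g f gdag : ℕ → ℕ) (κ cstar cf cdag ε : ℝ)
    -- the strictly increasing sequence of primes `q_1 < q_2 < …` with its asymptotics (A.1)
    (hqprime : ∀ j : ℕ, 1 ≤ j → (q j).Prime)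
    (hqmono : ∀ j : ℕ, 1 ≤ j → q j < q (j + 1))
    (hκ : 0 < κ)
    (hqasymp : ∃ A : ℝ, ∀ j : ℕ, 2 ≤ j →
      |(q j : ℝ) - κ * j * (Real.log j + Real.log (Real.log j))| ≤ A * (κ * j))
    -- `g` is monotonically increasing with `g(0) = 1` (A.2)
    (hg0 : g 0 = 1) (hgmono : Monotone g)
    -- the image of `g` contains the monoid `⟨Q⟩` generated by `Q = {q_j : j ≥ 1}` (A.3)
    (hgrange : ∀ m : ℕ, 0 < m → (∀ p : ℕ, p.Prime → p ∣ m → ∃ j, 1 ≤ j ∧ q j = p) →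
      ∃ x : ℕ, g x = m)
    -- `gdag` is the pseudo-inverse `g†`
    (hgdagdef : ∀ y : ℕ, gdag y = sInf {x : ℕ | 0 < x ∧ g x = y})
    -- the superadditivity assumption (A.4)
    (hcstar : 1 / (q 1 : ℝ) < cstar)
    (hsuper : ∀ a b : ℕ,
      (∀ p : ℕ, p.Prime → p ∣ a → ∃ j, 1 ≤ j ∧ q j = p) →
      (∀ p : ℕ, p.Prime → p ∣ b → ∃ j, 1 ≤ j ∧ q j = p) →
      q 1 ≤ a → a ≤ b →
      (gdag b : ℝ) + cstar * b * gdag a ≤ gdag (a * b))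
    -- the growth assumption `g(i)/g(i−1) = 1 + O(i^{−1/2−ε})` (A.5)
    (hε : 0 < ε)
    (hgratio : ∃ B : ℝ, ∀ i : ℕ, 1 ≤ i →
      |(g i : ℝ) / (g (i - 1) : ℝ) - 1| ≤ B * (i : ℝ) ^ (-(1 / 2 : ℝ) - ε))
    -- the sublinearity assumption `g(x) ≤ c_f·x` (A.6)
    (hcf : 0 < cf)
    (hgsub : ∀ x : ℕ, 1 ≤ x → (g x : ℝ) ≤ cf * x)
    -- the assumption `g†(q) = c_†·q + O(q/log q)` for `q ∈ Q` (A.7)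
    (hcdag : 0 < cdag)
    (hgdagasymp : ∃ B : ℝ, ∀ j : ℕ, 1 ≤ j →
      |(gdag (q j) : ℝ) - cdag * q j| ≤ B * (q j : ℝ) / Real.log (q j))
    -- `f` is multiplicative with `f(p^ν) = g(ν)` for `p ∈ Q`, `f(p^ν) ∈ {0,1}` otherwise
    (hf0 : f 0 = 1) (hf1 : f 1 = 1)
    (hfmult : ∀ m₁ m₂ : ℕ, Nat.Coprime m₁ m₂ → f (m₁ * m₂) = f m₁ * f m₂)
    (hfQ : ∀ p ν : ℕ, p.Prime → (∃ j, 1 ≤ j ∧ q j = p) → 1 ≤ ν → f (p ^ ν) = g ν)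
    (hfnotQ : ∀ p ν : ℕ, p.Prime → ¬(∃ j, 1 ≤ j ∧ q j = p) → 1 ≤ ν →
      f (p ^ ν) = 0 ∨ f (p ^ ν) = 1) :
    ∃ C : ℝ, 0 < C ∧ ∀ᶠ x : ℕ in atTop,
      (⨆ n ∈ Finset.Icc 1 x, Real.log (f (f n))) ≤
        Real.sqrt (Real.log x) / Real.log (Real.log x) *
          (Real.sqrt (8 * ∑' j : ℕ, (Real.log ((g (j + 1) : ℝ) / (g j : ℝ))) ^ 2) /
              Real.sqrt (κ * cdag) +
            C * (Real.log (Real.log (Real.log x)) / Real.log (Real.log x))) := by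
  obtain rfl : gdag = pseudoInverse g := funext hgdagdef
  obtain ⟨A, hA⟩ := hqasymp
  obtain ⟨B, hB⟩ := hgratio
  obtain ⟨B', hB'⟩ := hgdagasymp
  have hf : IsMultiplicativeLift (q '' Set.Ici 1) g f := ⟨hf0, hf1, hfmult, hfQ, hfnotQ⟩
  have hg (k : ℕ) : 0 < g k := hg0.ge.trans (hgmono k.zero_le)
  have hq : StrictMonoOn q (Set.Ici 1) := strictMonoOn_Ici_one hqmono
  have hq_le (p : ℕ) : p ∈ q '' Set.Ici 1 → q 1 ≤ p := by
    rintro ⟨j, hj, rfl⟩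
    exact hq.monotoneOn Set.self_mem_Ici hj hj
  have hone_le_cost (j : ℕ) (hj : 1 ≤ j) : 1 ≤ pseudoInverse g (q j) :=
    (pseudoInverse_mem hg0 (hqprime j hj).ne_one (hgrange _ (hqprime j hj).pos
      (hasPrimeFactorsIn_of_prime (hqprime j hj) ⟨j, hj, rfl⟩))).1
  have hcost (R : Finset ℕ) (hR : ∀ r ∈ R, r ∈ q '' Set.Ici 1) :=
    sum_factorization_mul_pseudoInverse_le hg0 hgmono hgrange
      (superadditive_of_weighted (hqprime 1 le_rfl).pos hq_le hcstar hsuper) hR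
  have hcost_large := eventually_mul_log_sub_mul_le_cost hκ.le hcdag
    (fun j ↦ le_apply_of_strictMonoOn_Ici_one hq (hqprime 1 le_rfl).one_le)
    (eventually_mul_log_sub_le_apply hκ.le hA) hB'
  obtain ⟨C, hC, hbound⟩ := hf.exists_eventually_log_apply_apply_le hg0 hg
    (summable_logIncrement_sq hg hgmono (by linarith) hB) (nonneg_of_abs_ratio_sub_one_le hB)
    (logIncrement_le hg (by linarith) hB) (eventually_forall_log_apply_le hg0 hcf.le hgsub)
    hqprime hq.injOn hone_le_cost hcost (mul_pos hκ hcdag) hcost_large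
  exact ⟨C, hC, eventually_iSup_Icc_le_of_forall_log_le (fun _ ↦ Real.log_natCast_nonneg _) hbound⟩
end
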